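/- Let X and Y be nonempty finite sets, μ: X → ℝ and ν: Y → ℝ strictly positive weight functions, c: X × Y → ℝ a cost, ε > 0, φ₁, φ₂ entropy functions satisfying Assumption A, and X_J ⊆ X a nonempty subset with μ_J := μ restricted to X_J. Define the solve map S_J on nonnegative plans π: X × Y → ℝ≥0 by S_J(π) := the unique minimizer over nonnegative plans on X_J × Y of E_J(·| ν_{-J}(π)), where ν_{-J}(π)(y) := Σ_{x ∉ X_J} π(x,y). Then S_J is continuous as a map from (ℝ≥0)^{X×Y} to (ℝ≥0)^{X_J×Y}. -/

import Mathlib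

open Filter Topology
open scoped Classical

noncomputable section

/-- `φ : ℝ → ℝ ∪ {+∞}` is an entropy function: lower semicontinuous, convex,
`dom(φ) ⊆ [0,∞)`, `dom(φ)\{0} ≠ ∅`, never taking the value `-∞`. -/
def IsEntropyFn (φ : ℝ → EReal) : Prop :=
  LowerSemicontinuous φ ∧
  (∀ x y a b : ℝ, 0 ≤ a → 0 ≤ b → a + b = 1 →
      φ (a * x + b * y) ≤ (a : EReal) * φ x + (b : EReal) * φ y) ∧
  (∀ x : ℝ, φ x ≠ ⊥) ∧
  (∀ x : ℝ, φ x < ⊤ → 0 ≤ x) ∧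
  (∃ x : ℝ, x ≠ 0 ∧ φ x < ⊤)

/-- The recession slope `φ'_∞ = lim_{x→∞} φ(x)/x`. -/
def recessionSlope (φ : ℝ → EReal) : EReal :=
  Filter.limsup (fun x : ℝ => φ x * ((x⁻¹ : ℝ) : EReal)) Filter.atTop

/-- The `φ`-divergence on a finite set `Z`:
`D_φ(ρ|σ) = ∑_{z : σ z > 0} σ z · φ(ρ z / σ z) + φ'_∞ · ∑_{z : σ z = 0} ρ z`. -/
def divergence {Z : Type*} [Fintype Z] (φ : ℝ → EReal) (ρ σ : Z → ℝ) : EReal :=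
  (∑ z, if 0 < σ z then (σ z : EReal) * φ (ρ z / σ z) else 0)
    + recessionSlope φ * ((∑ z, if σ z = 0 then ρ z else 0 : ℝ) : EReal)

/-- The convex conjugate `φ*(z) = sup_{x ∈ ℝ} (z·x − φ(x))`. -/
def conjFn (φ : ℝ → EReal) (z : ℝ) : EReal :=
  ⨆ x : ℝ, (((z * x : ℝ) : EReal) - φ x)

/-- Kullback–Leibler divergence on a finite set, with `0·log 0 = 0`:
`KL(ρ|σ) = ∑ z (ρ z log(ρ z/σ z) − ρ z + σ z)` if `ρ ≪ σ`, else `+∞`. -/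
def KLfin {Z : Type*} [Fintype Z] (ρ σ : Z → ℝ) : EReal :=
  if ∀ z, σ z = 0 → ρ z = 0 then
    ((∑ z, (ρ z * Real.log (ρ z / σ z) - ρ z + σ z) : ℝ) : EReal)
  else ⊤

/-- Assumption A: the entropy function `φ` is nonnegative, finite on `[0,∞)`,
and continuously differentiable on the interior `(0,∞)` of its domain. -/
def AssumptionA (φ : ℝ → EReal) : Prop :=
  IsEntropyFn φ ∧ (∀ x : ℝ, 0 ≤ φ x) ∧ (∀ x : ℝ, 0 ≤ x → φ x ≠ ⊤) ∧
  ContDiffOn ℝ 1 (fun s : ℝ => (φ s).toReal) (Set.Ioi (0 : ℝ))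

/-- Primal objective of the unbalanced (cell) problem with `Y`-submarginal `νm`:
`E_J(π|νm) = ⟨c, π⟩ + ε KL(π | μ⊗ν) + D_{φ₁}(P_X π | μ) + D_{φ₂}(P_Y π + νm | ν)`. -/
def EJfun {W Y : Type*} [Fintype W] [Fintype Y]
    (c : W → Y → ℝ) (ε : ℝ) (φ₁ φ₂ : ℝ → EReal)
    (μ : W → ℝ) (ν : Y → ℝ) (νm : Y → ℝ) (π : W → Y → ℝ) : EReal :=
  ((∑ x, ∑ y, c x y * π x y : ℝ) : EReal)
    + (ε : EReal) * KLfin (fun p : W × Y => π p.1 p.2) (fun p : W × Y => μ p.1 * ν p.2)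
    + divergence φ₁ (fun x => ∑ y, π x y) μ
    + divergence φ₂ (fun y => (∑ x, π x y) + νm y) ν

/-- Dual objective of the unbalanced (cell) problem with `Y`-submarginal `νm`. -/
def DJfun {W Y : Type*} [Fintype W] [Fintype Y]
    (c : W → Y → ℝ) (ε : ℝ) (φ₁ φ₂ : ℝ → EReal)
    (μ : W → ℝ) (ν : Y → ℝ) (νm : Y → ℝ) (α : W → ℝ) (β : Y → ℝ) : EReal :=
  ((ε * ∑ x, ∑ y, (1 - Real.exp ((α x + β y - c x y) / ε)) * (μ x * ν y) : ℝ) : EReal)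
    - (∑ x, (μ x : EReal) * conjFn φ₁ (-(α x)))
    - (∑ y, (ν y : EReal) * conjFn φ₂ (-(β y)))
    - ((∑ y, β y * νm y : ℝ) : EReal)

/-- The `Y`-submarginal `ν_{-J}` of the plan `π` outside the cell `J`:
`ν_{-J}(y) = ∑_{x ∉ J} π(x,y)`. -/
def outMarg {X Y : Type*} [Fintype X] (J : Set X) (π : X → Y → ℝ) : Y → ℝ :=
  fun y => ∑ x, (Jᶜ).indicator (fun x' => π x' y) x

/-- The global unbalanced objective
`E(π) = ⟨c, π⟩ + ε KL(π|μ⊗ν) + D_{φ₁}(P_X π|μ) + D_{φ₂}(P_Y π|ν)`. -/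
def Eglobal {X Y : Type*} [Fintype X] [Fintype Y]
    (c : X → Y → ℝ) (ε : ℝ) (φ₁ φ₂ : ℝ → EReal)
    (μ : X → ℝ) (ν : Y → ℝ) (π : X → Y → ℝ) : EReal :=
  EJfun c ε φ₁ φ₂ μ ν (fun _ => 0) π

lemma aux_cont {N E : Type*} [TopologicalSpace N] [NormedAddCommGroup E] [NormedSpace ℝ E]
    [ProperSpace E] (G : N → E → ℝ) (hG : Continuous (fun q : N × E => G q.1 q.2))
    (C : Set E) (hC : IsClosed C) (A : Set N)
    (hconv : ∀ n ∈ A, StrictConvexOn ℝ C (G n)) (s : N → E)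
    (hs : ∀ n ∈ A, s n ∈ C) (hmin : ∀ n ∈ A, ∀ p ∈ C, G n (s n) ≤ G n p) :
    ContinuousOn s A := by
  intro n0 hn0
  have hkey : ∀ p ∈ C, p ≠ s n0 → G n0 (s n0) < G n0 p := by
    intro p hp hne
    have h1 := (hconv n0 hn0).2 (hs n0 hn0) hp hne.symm (by norm_num : (0:ℝ) < 1/2)
      (by norm_num : (0:ℝ) < 1/2) (by norm_num)
    have h2 := hmin n0 hn0 _ ((hconv n0 hn0).1 (hs n0 hn0) hp (by norm_num : (0:ℝ) ≤ 1/2)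
      (by norm_num : (0:ℝ) ≤ 1/2) (by norm_num))
    simp only [smul_eq_mul] at h1
    linarith
  rw [ContinuousWithinAt, Metric.tendsto_nhds]
  intro δ0 hδ0
  obtain ⟨δ, hδ, hδ1⟩ := exists_between hδ0
  have hK : IsCompact (Metric.sphere (s n0) δ ∩ C) := (isCompact_sphere _ _).inter_right hC
  have hev : ∀ᶠ n in 𝓝 n0, ∀ p ∈ Metric.sphere (s n0) δ ∩ C, G n (s n0) < G n p := by
    apply hK.eventually_forall_of_forall_eventually
    intro p hp
    have hne : p ≠ s n0 := by
      rintro rfl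
      have := hp.1
      simp at this
      linarith
    have c1 : Continuous (fun q : N × E => G q.1 (s n0)) :=
      hG.comp (by fun_prop : Continuous (fun q : N × E => (q.1, s n0)))
    exact (isOpen_lt c1 hG).mem_nhds (hkey p hp.2 hne)
  filter_upwards [mem_nhdsWithin_of_mem_nhds hev, self_mem_nhdsWithin] with n hn hnA
  by_contra hcon
  push Not at hcon
  have hd : δ < dist (s n) (s n0) := lt_of_lt_of_le hδ1 hcon
  set d := dist (s n) (s n0) with hddef
  have hdpos : 0 < d := hδ.trans hd
  have ht0 : 0 ≤ δ / d := by positivity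
  have ht1 : δ / d ≤ 1 := by rw [div_le_one hdpos]; exact hd.le
  have hconvn := (hconv n hnA).convexOn
  have hq := hconvn.1 (hs n0 hn0) (hs n hnA) (sub_nonneg.2 ht1) ht0 (by ring)
  have hq2 := hconvn.2 (hs n0 hn0) (hs n hnA) (sub_nonneg.2 ht1) ht0 (by ring)
  have hsph : (1 - δ / d) • s n0 + (δ / d) • s n ∈ Metric.sphere (s n0) δ := by
    rw [mem_sphere_iff_norm]
    have : (1 - δ / d) • s n0 + (δ / d) • s n - s n0 = (δ / d) • (s n - s n0) := by
      rw [sub_smul, smul_sub, one_smul]; abel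
    rw [this, norm_smul, ← dist_eq_norm, ← hddef, Real.norm_of_nonneg ht0]
    field_simp
  have h3 := hn _ ⟨hsph, hq⟩
  have h4 := hmin n hnA _ (hs n0 hn0)
  simp only [smul_eq_mul] at hq2
  nlinarith

/-- Real continuous extension of an entropy function. -/
def auxF (φ : ℝ → EReal) (x : ℝ) : ℝ := (φ (max x 0)).toReal

lemma auxF_coe {φ : ℝ → EReal} (h : AssumptionA φ) {x : ℝ} (hx : 0 ≤ x) :
    ((auxF φ x : ℝ) : EReal) = φ x := by
  rw [auxF, max_eq_left hx]
  exact EReal.coe_toReal (h.2.2.1 x hx) (h.1.2.2.1 x)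

lemma auxF_convex {φ : ℝ → EReal} (h : AssumptionA φ) : ConvexOn ℝ (Set.Ici 0) (auxF φ) := by
  refine ⟨convex_Ici 0, ?_⟩
  intro x hx y hy a b ha hb hab
  simp only [Set.mem_Ici] at hx hy
  have h1 := h.1.2.1 x y a b ha hb hab
  rw [← auxF_coe h hx, ← auxF_coe h hy, ← auxF_coe h (by positivity)] at h1
  exact_mod_cast h1

lemma auxF_cont {φ : ℝ → EReal} (h : AssumptionA φ) : Continuous (auxF φ) := by
  have hon : ContinuousOn (auxF φ) (Set.Ici 0) := by
    intro x hx
    rcases eq_or_lt_of_le (show (0:ℝ) ≤ x from hx) with rfl | hx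
    · rw [ContinuousWithinAt]
      have hcv := auxF_convex h
      rw [tendsto_order]
      constructor
      · intro a ha
        have h0 : ((a : ℝ) : EReal) < φ 0 := by
          rw [← auxF_coe h le_rfl]; exact_mod_cast ha
        have := h.1.1 0 _ h0
        filter_upwards [mem_nhdsWithin_of_mem_nhds this, self_mem_nhdsWithin] with t ht ht0
        rw [← auxF_coe h ht0] at ht
        exact_mod_cast ht
      · intro a ha
        have hc : Tendsto (fun t : ℝ => (1 - t) * auxF φ 0 + t * auxF φ 1) (𝓝[Set.Ici 0] 0)
            (𝓝 (auxF φ 0)) := by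
          have : Continuous (fun t : ℝ => (1 - t) * auxF φ 0 + t * auxF φ 1) := by fun_prop
          have h2 := this.tendsto 0
          simp only [sub_zero, one_mul, zero_mul, add_zero] at h2
          exact h2.mono_left nhdsWithin_le_nhds
        have h1 : ∀ᶠ t : ℝ in 𝓝[Set.Ici 0] 0, t < 1 :=
          mem_nhdsWithin_of_mem_nhds (Iio_mem_nhds one_pos)
        filter_upwards [hc.eventually (Iio_mem_nhds ha), h1, self_mem_nhdsWithin] with t ht ht1 ht0
        have := hcv.2 (x := 0) (y := 1) (by simp) (by simp) (sub_nonneg.2 ht1.le) ht0 (by ring)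
        simp only [smul_eq_mul, mul_zero, mul_one, zero_add] at this
        exact lt_of_le_of_lt this ht
    · have h1 := (h.2.2.2.continuousOn).continuousAt (Ioi_mem_nhds hx)
      apply ContinuousAt.continuousWithinAt
      refine h1.congr ?_
      filter_upwards [Ioi_mem_nhds hx] with t ht
      rw [auxF, max_eq_left (le_of_lt ht)]
  have : auxF φ = fun x => auxF φ (max x 0) := by
    funext x; simp [auxF]
  rw [this]
  exact hon.comp_continuous (by fun_prop) (fun x => by simp)

/-- Real version of the objective. -/
def auxG {W Y : Type*} [Fintype W] [Fintype Y]
    (c : W → Y → ℝ) (ε : ℝ) (φ₁ φ₂ : ℝ → EReal)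
    (μ : W → ℝ) (ν : Y → ℝ) (νm : Y → ℝ) (π : W → Y → ℝ) : ℝ :=
  (∑ p : W × Y, (ε * (π p.1 p.2 * Real.log (π p.1 p.2)) +
      ((c p.1 p.2 - ε * Real.log (μ p.1 * ν p.2) - ε) * π p.1 p.2 + ε * (μ p.1 * ν p.2))))
    + ((∑ x, μ x * auxF φ₁ ((∑ y, π x y) / μ x))
    + ∑ y, ν y * auxF φ₂ (((∑ x, π x y) + νm y) / ν y))

lemma aux_coe_sum {Z : Type*} (s : Finset Z) (f : Z → ℝ) :
    ((∑ z ∈ s, f z : ℝ) : EReal) = ∑ z ∈ s, (f z : EReal) := by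
  induction s using Finset.induction_on with
  | empty => simp
  | insert a s ha ih => rw [Finset.sum_insert ha, Finset.sum_insert ha, EReal.coe_add, ih]

lemma aux_div {Z : Type*} [Fintype Z] {φ : ℝ → EReal} (h : AssumptionA φ) (ρ σ : Z → ℝ)
    (hρ : ∀ z, 0 ≤ ρ z) (hσ : ∀ z, 0 < σ z) :
    divergence φ ρ σ = ((∑ z, σ z * auxF φ (ρ z / σ z) : ℝ) : EReal) := by
  unfold divergence
  have h2 : (∑ z, if σ z = 0 then ρ z else 0 : ℝ) = 0 :=
    Finset.sum_eq_zero (fun z _ => if_neg (hσ z).ne')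
  rw [h2, aux_coe_sum]
  simp only [EReal.coe_zero, mul_zero, add_zero]
  refine Finset.sum_congr rfl (fun z _ => ?_)
  rw [if_pos (hσ z), EReal.coe_mul, auxF_coe h (div_nonneg (hρ z) (hσ z).le)]

lemma auxG_eq {W Y : Type*} [Fintype W] [Fintype Y]
    (c : W → Y → ℝ) (ε : ℝ) (φ₁ φ₂ : ℝ → EReal) (h₁ : AssumptionA φ₁) (h₂ : AssumptionA φ₂)
    (μ : W → ℝ) (ν : Y → ℝ) (hμ : ∀ x, 0 < μ x) (hν : ∀ y, 0 < ν y)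
    (νm : Y → ℝ) (hm : ∀ y, 0 ≤ νm y) (π : W → Y → ℝ) (hπ : ∀ x y, 0 ≤ π x y) :
    EJfun c ε φ₁ φ₂ μ ν νm π = (auxG c ε φ₁ φ₂ μ ν νm π : EReal) := by
  unfold EJfun
  rw [aux_div h₁ _ _ (fun x => Finset.sum_nonneg fun y _ => hπ x y) hμ,
    aux_div h₂ _ _ (fun y => add_nonneg (Finset.sum_nonneg fun x _ => hπ x y) (hm y)) hν]
  unfold KLfin
  rw [if_pos (fun z hz => absurd hz (mul_pos (hμ _) (hν _)).ne')]
  rw [← EReal.coe_mul, ← EReal.coe_add, ← EReal.coe_add, ← EReal.coe_add, auxG, ← add_assoc]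
  congr 3
  rw [Finset.mul_sum, ← Fintype.sum_prod_type' (fun x y => c x y * π x y), ← Finset.sum_add_distrib]
  refine Finset.sum_congr rfl (fun p _ => ?_)
  have hp := (mul_pos (hμ p.1) (hν p.2)).ne'
  rcases eq_or_ne (π p.1 p.2) 0 with h0 | h0
  · simp [h0]
  · rw [Real.log_div h0 hp]; ring

lemma auxG_convex {W Y : Type*} [Fintype W] [Fintype Y]
    (c : W → Y → ℝ) (ε : ℝ) (hε : 0 < ε) (φ₁ φ₂ : ℝ → EReal) (h₁ : AssumptionA φ₁)
    (h₂ : AssumptionA φ₂)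
    (μ : W → ℝ) (ν : Y → ℝ) (hμ : ∀ x, 0 < μ x) (hν : ∀ y, 0 < ν y)
    (νm : Y → ℝ) (hm : ∀ y, 0 ≤ νm y) :
    StrictConvexOn ℝ {π : W → Y → ℝ | ∀ x y, 0 ≤ π x y} (auxG c ε φ₁ φ₂ μ ν νm) := by
  have hC : Convex ℝ {π : W → Y → ℝ | ∀ x y, 0 ≤ π x y} := by
    intro p hp q hq a b ha hb _ x y
    have := hp x y
    have := hq x y
    simp only [Pi.add_apply, Pi.smul_apply, smul_eq_mul]
    positivity
  unfold auxG
  refine StrictConvexOn.add_convexOn ?_ (ConvexOn.add ?_ ?_)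
  · refine ⟨hC, ?_⟩
    intro p hp q hq hne a b ha hb hab
    simp only [Pi.add_apply, Pi.smul_apply, smul_eq_mul, Finset.mul_sum]
    rw [← Finset.sum_add_distrib]
    have hb' : b = 1 - a := by linarith
    have key : ∀ x y, p x y ≠ q x y → ε * ((a * p x y + b * q x y) * Real.log (a * p x y + b * q x y))
        < ε * (a * (p x y * Real.log (p x y)) + b * (q x y * Real.log (q x y))) := by
      intro x y hxy
      have := Real.strictConvexOn_mul_log.2 (hp x y) (hq x y) hxy ha hb hab
      simp only [smul_eq_mul] at this
      exact mul_lt_mul_of_pos_left this hε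
    apply Finset.sum_lt_sum
    · rintro ⟨x, y⟩ _
      rcases eq_or_ne (p x y) (q x y) with he | he
      · simp only [he]
        rw [show a * q x y + b * q x y = q x y by rw [← add_mul, hab, one_mul]]
        rw [← add_mul, hab, one_mul]
      · have := key x y he
        subst hb'
        simp only
        linarith
    · obtain ⟨x, hx⟩ := Function.ne_iff.1 hne
      obtain ⟨y, hy⟩ := Function.ne_iff.1 hx
      refine ⟨(x, y), Finset.mem_univ _, ?_⟩
      have := key x y hy
      subst hb'
      simp only
      linarith
  · refine ⟨hC, ?_⟩
    intro p hp q hq a b ha hb hab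
    simp only [Pi.add_apply, Pi.smul_apply, smul_eq_mul, Finset.mul_sum]
    rw [← Finset.sum_add_distrib]
    refine Finset.sum_le_sum (fun x _ => ?_)
    have := (auxF_convex h₁).2 (x := (∑ y, p x y) / μ x) (y := (∑ y, q x y) / μ x)
      (div_nonneg (Finset.sum_nonneg fun y _ => hp x y) (hμ x).le)
      (div_nonneg (Finset.sum_nonneg fun y _ => hq x y) (hμ x).le) ha hb hab
    simp only [smul_eq_mul] at this
    have e : (∑ y, (a * p x y + b * q x y)) / μ x
        = a * ((∑ y, p x y) / μ x) + b * ((∑ y, q x y) / μ x) := by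
      rw [Finset.sum_add_distrib, ← Finset.mul_sum, ← Finset.mul_sum]; ring
    rw [e]
    have := mul_le_mul_of_nonneg_left this (hμ x).le
    linarith
  · refine ⟨hC, ?_⟩
    intro p hp q hq a b ha hb hab
    simp only [Pi.add_apply, Pi.smul_apply, smul_eq_mul, Finset.mul_sum]
    rw [← Finset.sum_add_distrib]
    refine Finset.sum_le_sum (fun y _ => ?_)
    have := (auxF_convex h₂).2 (x := ((∑ x, p x y) + νm y) / ν y)
      (y := ((∑ x, q x y) + νm y) / ν y)
      (div_nonneg (add_nonneg (Finset.sum_nonneg fun x _ => hp x y) (hm y)) (hν y).le)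
      (div_nonneg (add_nonneg (Finset.sum_nonneg fun x _ => hq x y) (hm y)) (hν y).le) ha hb hab
    simp only [smul_eq_mul] at this
    have e : ((∑ x, (a * p x y + b * q x y)) + νm y) / ν y
        = a * (((∑ x, p x y) + νm y) / ν y) + b * (((∑ x, q x y) + νm y) / ν y) := by
      have hb' : b = 1 - a := by linarith
      rw [Finset.sum_add_distrib, ← Finset.mul_sum, ← Finset.mul_sum, hb']; ring
    rw [e]
    have := mul_le_mul_of_nonneg_left this (hν y).le
    linarith

lemma auxG_cont {N W Y : Type*} [TopologicalSpace N] [Fintype W] [Fintype Y]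
    (c : W → Y → ℝ) (ε : ℝ) (φ₁ φ₂ : ℝ → EReal) (h₁ : AssumptionA φ₁) (h₂ : AssumptionA φ₂)
    (μ : W → ℝ) (ν : Y → ℝ) (m : N → Y → ℝ) (hm : Continuous m) :
    Continuous (fun q : N × (W → Y → ℝ) => auxG c ε φ₁ φ₂ μ ν (m q.1) q.2) := by
  have hf1 := auxF_cont h₁
  have hf2 := auxF_cont h₂
  have hm' : ∀ y, Continuous fun n => m n y := fun y => (continuous_apply y).comp hm
  have hl : ∀ x y, Continuous fun q : N × (W → Y → ℝ) => q.2 x y * Real.log (q.2 x y) :=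
    fun x y => Real.continuous_mul_log.comp (by fun_prop : Continuous fun q : N × (W → Y → ℝ) => q.2 x y)
  unfold auxG
  refine Continuous.add ?_ (Continuous.add ?_ ?_)
  · refine continuous_finset_sum _ (fun p _ => ?_)
    have := hl p.1 p.2
    fun_prop
  · refine continuous_finset_sum _ (fun x _ => ?_)
    exact continuous_const.mul (hf1.comp (by fun_prop))
  · refine continuous_finset_sum _ (fun y _ => ?_)
    have := hm' y
    exact continuous_const.mul (hf2.comp (by fun_prop))

/-- continuity of the solve map `S_J` sending a nonnegative plan
`π` on `X × Y` to the unique minimizer of the cell subproblem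
`E_J(·|ν_{-J}(π))` on `X_J × Y`. -/
theorem solve_map_continuous
    {X Y : Type*} [Fintype X] [Fintype Y] [Nonempty X] [Nonempty Y]
    (μ : X → ℝ) (ν : Y → ℝ) (hμ : ∀ x, 0 < μ x) (hν : ∀ y, 0 < ν y)
    (c : X → Y → ℝ) (ε : ℝ) (hε : 0 < ε)
    (φ₁ φ₂ : ℝ → EReal) (h₁ : AssumptionA φ₁) (h₂ : AssumptionA φ₂)
    (J : Set X) (hJ : J.Nonempty)
    (S : (X → Y → ℝ) → (↥J → Y → ℝ))
    (hS : ∀ π : X → Y → ℝ, (∀ x y, 0 ≤ π x y) →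
      (∀ (j : J) (y : Y), 0 ≤ S π j y) ∧
      ∀ π' : ↥J → Y → ℝ, (∀ (j : J) (y : Y), 0 ≤ π' j y) →
        EJfun (fun (j : J) y => c j y) ε φ₁ φ₂ (fun (j : J) => μ j) ν
            (outMarg J π) (S π)
          ≤ EJfun (fun (j : J) y => c j y) ε φ₁ φ₂ (fun (j : J) => μ j) ν
            (outMarg J π) π') :
    ContinuousOn S {π : X → Y → ℝ | ∀ x y, 0 ≤ π x y} := by
  have hout : ∀ π : X → Y → ℝ, (∀ x y, 0 ≤ π x y) → ∀ y, 0 ≤ outMarg J π y := by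
    intro π hπ y
    exact Finset.sum_nonneg fun x _ => Set.indicator_nonneg (fun x' _ => hπ x' y) x
  have hm : Continuous (fun π : X → Y → ℝ => outMarg J π) := by
    refine continuous_pi fun y => ?_
    refine continuous_finset_sum _ fun x _ => ?_
    by_cases hx : x ∈ Jᶜ
    · simp only [Set.indicator_of_mem hx]; fun_prop
    · simp only [Set.indicator_of_notMem hx]; fun_prop
  have hμJ : ∀ j : J, 0 < μ j := fun j => hμ j
  refine aux_cont (fun π p => auxG (fun (j : J) y => c j y) ε φ₁ φ₂ (fun (j : J) => μ j) ν
    (outMarg J π) p) (auxG_cont _ ε φ₁ φ₂ h₁ h₂ _ ν _ hm)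
    {p : J → Y → ℝ | ∀ x y, 0 ≤ p x y} ?_ _ ?_ S ?_ ?_
  · simp only [Set.setOf_forall]
    exact isClosed_iInter fun x => isClosed_iInter fun y =>
      isClosed_le continuous_const (by fun_prop)
  · intro π hπ
    exact auxG_convex _ ε hε φ₁ φ₂ h₁ h₂ _ ν hμJ hν _ (hout π hπ)
  · intro π hπ
    exact (hS π hπ).1
  · intro π hπ p hp
    have := (hS π hπ).2 p hp
    rw [auxG_eq _ ε φ₁ φ₂ h₁ h₂ _ ν hμJ hν _ (hout π hπ) _ (hS π hπ).1,
      auxG_eq _ ε φ₁ φ₂ h₁ h₂ _ ν hμJ hν _ (hout π hπ) _ hp] at this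
    exact_mod_cast this

end
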